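/- Let m, n, ñ ∈ ℕ, let a ≤ x* ≤ b be real numbers, and let w : ℝ → ℝ be continuous on [a,b]. Suppose the nodes x_0, …, x_n ∈ [a,b] and weights W_0, …, W_n satisfy, for every real polynomial p of degree at most m, ∫_a^b w(x) p(x) dx = Σ_{k=0}^{n} W_k p(x_k), and the nodes x̃_0, …, x̃_ñ ∈ [x*,b] and weights W̃_0, …, W̃_ñ satisfy, for every real polynomial p of degree at most m, ∫_{x*}^b w(x) p(x) dx = Σ_{k=0}^{ñ} W̃_k p(x̃_k). Let p⁻, p⁺ be real polynomials of degree at most m and define the piecewise function f by f(x) = p⁻(x) for x < x* and f(x) = p⁺(x) for x ≥ x*. Then ∫_a^b w(x) f(x) dx = Σ_{k=0}^{n} W_k p⁻(x_k) + Σ_{k=0}^{ñ} W̃_k (p⁺(x̃_k) − p⁻(x̃_k)). -/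

import Mathlib

/-!
Since `f = pm + (pp - pm) · 1_{[xs, ∞)}`, the integral of `w f` over `[a, b]` is that of `w pm` over
`[a, b]` plus that of `w (pp - pm)` over `[xs, b]`. Each of the two quadrature rules is exact for
its polynomial integrand.
-/

/-- If a quadrature rule on `[a,b]` with weight `w` is exact for polynomials of
degree at most `m`, and a second quadrature rule on `[xs,b]` with weight `w` is
also exact for polynomials of degree at most `m`, then the corrected formula
integrates exactly any piecewise polynomial of degree at most `m` with a
discontinuity at `xs`. -/
theorem quadrature_corrected_exact_piecewise_poly
    (m n n' : ℕ) (a xs b : ℝ) (hax : a ≤ xs) (hxb : xs ≤ b)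
    (w : ℝ → ℝ) (hw : ContinuousOn w (Set.Icc a b))
    (x : Fin (n + 1) → ℝ) (W : Fin (n + 1) → ℝ)
    (hxmem : ∀ i, x i ∈ Set.Icc a b)
    (hexact : ∀ p : Polynomial ℝ, p.degree ≤ m →
      (∫ y in a..b, w y * p.eval y) = ∑ i, W i * p.eval (x i))
    (x' : Fin (n' + 1) → ℝ) (W' : Fin (n' + 1) → ℝ)
    (hx'mem : ∀ i, x' i ∈ Set.Icc xs b)
    (hexact' : ∀ p : Polynomial ℝ, p.degree ≤ m →
      (∫ y in xs..b, w y * p.eval y) = ∑ i, W' i * p.eval (x' i))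
    (pm pp : Polynomial ℝ) (hpm : pm.degree ≤ m) (hpp : pp.degree ≤ m)
    (f : ℝ → ℝ)
    (hf : ∀ y, f y = if y < xs then pm.eval y else pp.eval y) :
    (∫ y in a..b, w y * f y)
      = (∑ i, W i * pm.eval (x i)) +
        ∑ i, W' i * (pp.eval (x' i) - pm.eval (x' i)) := by
  have hwp : ∀ (p : Polynomial ℝ) (c d : ℝ), c ≤ d → a ≤ c → d ≤ b →
      IntervalIntegrable (fun y => w y * p.eval y) MeasureTheory.volume c d := by
    intro p c d hcd hac hdb
    refine ContinuousOn.intervalIntegrable ?_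
    rw [Set.uIcc_of_le hcd]
    exact (hw.mono (Set.Icc_subset_Icc hac hdb)).mul p.continuous.continuousOn
  -- Open intervals suffice for the integrals, and avoid `xs`, where `f` switches to `pp`.
  have hleft : Set.EqOn (fun y => w y * pm.eval y) (fun y => w y * f y) (Set.uIoo a xs) := by
    intro y hy
    rw [Set.uIoo_of_le hax] at hy
    simp [hf, hy.2]
  have hright : Set.EqOn (fun y => w y * pp.eval y) (fun y => w y * f y) (Set.uIoo xs b) := by
    intro y hy
    rw [Set.uIoo_of_le hxb] at hy
    simp [hf, hy.1.le.not_gt]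
  have hm₁ := hwp pm a xs hax le_rfl hxb
  have hm₂ := hwp pm xs b hxb hax le_rfl
  have hp₂ := hwp pp xs b hxb hax le_rfl
  have hsub := hexact' (pp - pm) ((Polynomial.degree_sub_le _ _).trans (max_le hpp hpm))
  simp only [Polynomial.eval_sub, mul_sub (w _)] at hsub
  rw [intervalIntegral.integral_sub hp₂ hm₂] at hsub
  rw [← hexact pm hpm, ← hsub,
    ← intervalIntegral.integral_add_adjacent_intervals (hm₁.congr_uIoo hleft)
      (hp₂.congr_uIoo hright),
    ← intervalIntegral.integral_add_adjacent_intervals hm₁ hm₂,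
    ← intervalIntegral.integral_congr_uIoo hleft,
    ← intervalIntegral.integral_congr_uIoo hright]
  ring
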